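/- For every nonempty rich word w of length n there exists a word u with |u| ≤ n such that wu is rich and wu can be extended in at least two ways (i.e., φ(n) ≤ n). -/

import Mathlib

def Rich {A : Type*} (w : List A) : Prop :=
  {p : List A | p.reverse = p ∧ p <:+: w}.ncard = w.length + 1
/-- `v` can be extended (to a rich word) in at least two ways. -/
def TwoWays {A : Type*} (v : List A) : Prop :=
  ∃ x y : A, x ≠ y ∧ Rich (v ++ [x]) ∧ Rich (v ++ [y])

/-- The factor of `f` on the positions `i ≤ k < j` is a palindrome. -/
def Pal {A : Type*} (f : ℤ → A) (i j : ℤ) : Prop :=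
  ∀ k, i ≤ k → k < j → f k = f (i + j - 1 - k)

/-- The suffix of `f 0 ⋯ f (N - 1)` starting at position `s` has no earlier occurrence. -/
def Unioccurrent {A : Type*} (f : ℤ → A) (s N : ℤ) : Prop :=
  ∀ t, 0 ≤ t → t < s → ∃ k, s ≤ k ∧ k < N ∧ f k ≠ f (k - s + t)

/-- Every nonempty prefix of `f` of length at most `B` has a unioccurrent palindromic suffix. -/
def RichTo {A : Type*} (f : ℤ → A) (B : ℤ) : Prop :=
  ∀ N, 0 < N → N ≤ B → ∃ s, 0 ≤ s ∧ s < N ∧ Pal f s N ∧ Unioccurrent f s N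

section Sequences

variable {A : Type*} {f g : ℤ → A}

theorem RichTo.mono {B C : ℤ} (h : RichTo f B) (hC : C ≤ B) : RichTo f C :=
  fun N h0 hN => h N h0 (hN.trans hC)

theorem Pal.congr {i j : ℤ} (h : Pal f i j) (hfg : ∀ k, i ≤ k → k < j → g k = f k) :
    Pal g i j := by
  intro k h1 h2
  rw [hfg k h1 h2, hfg _ (by omega) (by omega)]
  exact h k h1 h2

theorem RichTo.congr {B : ℤ} (h : RichTo f B) (hfg : ∀ k, 0 ≤ k → k < B → g k = f k) :
    RichTo g B := by
  intro N h0 hN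
  obtain ⟨s, hs0, hsN, hp, hu⟩ := h N h0 hN
  refine ⟨s, hs0, hsN, hp.congr fun k _ _ => hfg k (by omega) (by omega), fun t h1 h2 => ?_⟩
  obtain ⟨k, hk1, hk2, hk⟩ := hu t h1 h2
  refine ⟨k, hk1, hk2, ?_⟩
  rwa [hfg k (by omega) (by omega), hfg _ (by omega) (by omega)]

/-- Complete returns to palindromes are palindromes. -/
theorem RichTo.pal_return {B : ℤ} (h : RichTo f B) {i i' l : ℤ}
    (hi : 0 ≤ i) (hii : i < i') (hl : 0 ≤ l) (hB : i' + l ≤ B) (hpal : Pal f i (i + l))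
    (heq : ∀ k, 0 ≤ k → k < l → f (i + k) = f (i' + k))
    (hno : ∀ t, i < t → t < i' → ∃ k, 0 ≤ k ∧ k < l ∧ f (t + k) ≠ f (i + k)) :
    Pal f i (i' + l) := by
  obtain ⟨n, hn⟩ : ∃ n : ℕ, (i' + l).toNat ≤ n := ⟨_, le_rfl⟩
  induction n generalizing i i' with
  | zero => omega
  | succ n ih =>
    obtain ⟨s, hs0, hsN, hs, hu⟩ := h (i' + l) (by omega) hB
    have hsi' : s < i' := by
      by_contra hc
      obtain ⟨k, hk1, hk2, hk⟩ := hu (s - i' + i) (by omega) (by omega)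
      have := heq (k - i') (by omega) (by omega)
      rw [show i + (k - i') = k - s + (s - i' + i) by ring, show i' + (k - i') = k by ring] at this
      exact hk this.symm
    have hrev : ∀ k, 0 ≤ k → k < l → f (i + (l - 1 - k)) = f (i + k) := by
      intro k h1 h2
      rw [hpal (i + k) (by omega) (by omega)]
      congr 1; ring
    have hocc : ∀ k, 0 ≤ k → k < l → f (s + k) = f (i + k) := by
      intro k h1 h2
      rw [hs (s + k) (by omega) (by omega),
        show s + (i' + l) - 1 - (s + k) = i' + (l - 1 - k) by ring,
        ← heq (l - 1 - k) (by omega) (by omega), hrev k h1 h2]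
    have hsi : s ≤ i := by
      by_contra hc
      obtain ⟨k, hk1, hk2, hk⟩ := hno s (by omega) hsi'
      exact hk (hocc k hk1 hk2)
    rcases hsi.eq_or_lt with rfl | hlt
    · exact hs
    have hP : Pal f s (s + i' - i + l) := by
      refine ih hs0 (by omega) (by omega) ?_ ?_ ?_ (by omega)
      · intro k h1 h2
        have e1 := hocc (k - s) (by omega) (by omega)
        have e2 := hocc (l - 1 - (k - s)) (by omega) (by omega)
        rw [hrev _ (by omega) (by omega), ← e1] at e2
        rw [show s + (s + l) - 1 - k = s + (l - 1 - (k - s)) by ring, e2]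
        congr 1; ring
      · intro k h1 h2
        rw [hocc k h1 h2, hs (s + i' - i + k) (by omega) (by omega), ← hrev k h1 h2]
        congr 1; ring
      · intro t h1 h2
        obtain ⟨k, hk1, hk2, hk⟩ := hno (s + i' - t) (by omega) (by omega)
        refine ⟨l - 1 - k, by omega, by omega, ?_⟩
        rw [hocc _ (by omega) (by omega), hrev k hk1 hk2, hs _ (by omega) (by omega),
          show s + (i' + l) - 1 - (t + (l - 1 - k)) = s + i' - t + k by ring]
        exact hk
    intro k h1 h2
    rw [hs k (by omega) (by omega), hP _ (by omega) (by omega), hs _ (by omega) (by omega)]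
    congr 1; ring

/-- The last of finitely many integers with a property, below an integer with the property. -/
theorem exists_last {p : ℤ → Prop} {a b : ℤ} (h : ∃ t, a < t ∧ t < b ∧ p t) :
    ∃ t, a < t ∧ t < b ∧ p t ∧ ∀ u, t < u → u < b → ¬ p u := by
  obtain ⟨t, ⟨h1, h2, h3⟩, hm⟩ := Int.exists_greatest_of_bdd
    (P := fun t => a < t ∧ t < b ∧ p t) ⟨b, fun z hz => hz.2.1.le⟩ h
  exact ⟨t, h1, h2, h3, fun u hu hb hp => absurd (hm u ⟨by omega, hb, hp⟩) (by omega)⟩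

/-- The first of finitely many integers with a property, above an integer. -/
theorem exists_first {p : ℤ → Prop} {a b : ℤ} (h : ∃ t, a < t ∧ t < b ∧ p t) :
    ∃ t, a < t ∧ t < b ∧ p t ∧ ∀ u, a < u → u < t → ¬ p u := by
  obtain ⟨t, ⟨h1, h2, h3⟩, hm⟩ := Int.exists_least_of_bdd
    (P := fun t => a < t ∧ t < b ∧ p t) ⟨a, fun z hz => hz.1.le⟩ h
  exact ⟨t, h1, h2, h3, fun u hu hb hp => absurd (hm u ⟨hu, by omega, hp⟩) (by omega)⟩

/-- Palindromic closure preserves richness. -/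
theorem RichTo.exists_closure {n : ℤ} (h : RichTo f n) (hn : 0 < n) :
    ∃ (g : ℤ → A) (s : ℤ), 0 ≤ s ∧ s < n ∧ (∀ k, 0 ≤ k → k < n → g k = f k) ∧
      Pal g 0 (n + s) ∧ RichTo g (n + s) := by
  obtain ⟨s, hs0, hsn, hs, hu⟩ := h n hn le_rfl
  let g : ℤ → A := fun k => if k < n then f k else f (n + s - 1 - k)
  have hg1 : ∀ k, k < n → g k = f k := fun k hk => if_pos hk
  have hg2 : ∀ k, n ≤ k → g k = f (n + s - 1 - k) := fun k hk => if_neg (by omega)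
  have hpal : ∀ k, 0 ≤ k → k < n + s → g k = g (n + s - 1 - k) := by
    intro k h0 h1
    by_cases hk : k < n
    · by_cases hk' : n + s - 1 - k < n
      · rw [hg1 _ hk, hg1 _ hk', hs k (by omega) hk]
        congr 1; ring
      · rw [hg1 _ hk, hg2 _ (by omega)]
        congr 1; ring
    · rw [hg2 _ (by omega), hg1 _ (by omega)]
  refine ⟨g, s, hs0, hsn, fun k _ hk => hg1 k hk, ?_, ?_⟩
  · intro k h0 h1
    rw [hpal k h0 h1]
    congr 1; ring
  · intro N h0 hN
    by_cases hNn : N ≤ n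
    · exact h.congr (fun k _ hk => hg1 k hk) N h0 hNn
    refine ⟨n + s - N, by omega, by omega, ?_, ?_⟩
    · intro k h1 h2
      rw [hpal k (by omega) (by omega)]
      congr 1; ring
    · intro t h1 h2
      obtain ⟨k, hk1, hk2, hk⟩ := hu (t + N - n) (by omega) (by omega)
      refine ⟨k, by omega, by omega, ?_⟩
      rw [hg1 k hk2, hg1 _ (by omega)]
      rwa [show k - (n + s - N) + t = k - s + (t + N - n) by ring]

theorem periodic_mul {d : ℤ} (hper : ∀ k, f (k + d) = f k) (j k : ℤ) : f (k + j * d) = f k := by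
  have : Function.Periodic f d := hper
  simpa using this.int_mul j k

/-- A rich palindrome has a periodic extension with all prefixes rich. -/
theorem RichTo.exists_periodic {M : ℤ} (h : RichTo f M) (hM : 0 < M) (hpal : Pal f 0 M) :
    ∃ (g : ℤ → A) (d : ℤ), 0 < d ∧ d ≤ M ∧ (∀ k, 0 ≤ k → k < M → g k = f k) ∧
      (∀ k, g (k + d) = g k) ∧ (∀ k, g (M - 1 - k) = g k) ∧ (∀ B, RichTo g B) ∧
      ∀ t, 0 < t → t < d → ¬ Pal g t M := by
  obtain ⟨d, hd0, hdM, hd, hmin⟩ := exists_first (p := fun t => Pal f t M) (a := 0) (b := M + 1)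
    ⟨M, hM, by omega, fun k h1 h2 => by omega⟩
  let g : ℤ → A := fun k => f (k % d)
  have hper : ∀ k, g (k + d) = g k := fun k => by simp [g]
  have hshift : ∀ k, 0 ≤ k → k + d < M → f (k + d) = f k := by
    intro k h1 h2
    rw [hd (k + d) (by omega) h2, hpal k h1 (by omega)]
    congr 1; ring
  have hgf' : ∀ n : ℕ, ∀ k : ℤ, 0 ≤ k → k < M → k.toNat ≤ n → g k = f k := by
    intro n
    induction n with
    | zero =>
      intro k h0 _ hk
      obtain rfl : k = 0 := by omega
      simp [g]
    | succ n ih =>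
      intro k h0 h1 hk
      by_cases hkd : k < d
      · simp [g, Int.emod_eq_of_lt h0 hkd]
      · have e1 := ih (k - d) (by omega) (by omega) (by omega)
        have e2 := hper (k - d)
        have e3 := hshift (k - d) (by omega) (by omega)
        rw [sub_add_cancel] at e2 e3
        rw [e2, e1, e3]
  have hgf : ∀ k, 0 ≤ k → k < M → g k = f k := fun k h0 h1 => hgf' _ k h0 h1 le_rfl
  have hmul := periodic_mul hper
  have hrefl : ∀ k, g (M - 1 - k) = g k := by
    intro k
    have h1 := Int.emod_nonneg k hd0.ne'
    have h2 := Int.emod_lt_of_pos k hd0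
    have h3 := Int.emod_add_mul_ediv k d
    have e1 := hmul (k / d) (k % d)
    have e2 := hmul (-(k / d)) (M - 1 - k % d)
    rw [show k % d + k / d * d = k by linarith] at e1
    rw [show M - 1 - k % d + -(k / d) * d = M - 1 - k by linarith] at e2
    rw [e1, e2, hgf _ (by omega) (by omega), hgf _ (by omega) (by omega),
      hpal (k % d) (by omega) (by omega)]
    congr 1; ring
  have hgM : RichTo g M := h.congr hgf
  have hgmin : ∀ t, 0 < t → t < d → ¬ Pal g t M := fun t h1 h2 hp =>
    hmin t h1 h2 (hp.congr fun k h3 h4 => (hgf k (by omega) h4).symm)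
  have hfresh : ∀ t, 0 < t → t < d → ∃ k, 0 ≤ k ∧ k < M - d ∧ g (t + k) ≠ g (d + k) := by
    by_contra! hc
    obtain ⟨t, ht0, htd, ht, hlast⟩ := exists_last
      (p := fun t => ∀ k, 0 ≤ k → k < M - d → g (t + k) = g (d + k)) hc
    refine hgmin t ht0 htd ?_
    have := hgM.pal_return (i := t) (i' := d) (l := M - d) (by omega) htd (by omega) (by omega)
      ?_ ht ?_
    · rwa [add_sub_cancel] at this
    · intro k h1 h2
      have e1 := ht (k - t) (by omega) (by omega)
      have e2 := ht (t + (M - d) - 1 - k) (by omega) (by omega)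
      rw [show t + (k - t) = k by ring] at e1
      rw [show t + (t + (M - d) - 1 - k) = t + (t + (M - d)) - 1 - k by ring] at e2
      rw [e1, e2, ← hrefl, ← hper]
      congr 1; ring
    · intro u h1 h2
      have := hlast u h1 h2
      push Not at this
      obtain ⟨k, hk1, hk2, hk⟩ := this
      exact ⟨k, hk1, hk2, by rwa [ht k hk1 hk2]⟩
  refine ⟨g, d, hd0, by omega, hgf, hper, hrefl, fun B N h0 _ => ?_, hgmin⟩
  by_cases hNM : N ≤ M
  · exact hgM N h0 hNM
  have h1 := Int.emod_nonneg (M - N) hd0.ne'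
  have h2 := Int.emod_lt_of_pos (M - N) hd0
  have h3 := Int.emod_add_mul_ediv (M - N) d
  refine ⟨(M - N) % d, h1, by omega, ?_, ?_⟩
  · intro k _ _
    rw [← hrefl k, ← hmul (-((M - N) / d)) (M - 1 - k)]
    congr 1
    linarith
  · intro t ht0 hts
    obtain ⟨k, hk1, hk2, hk⟩ := hfresh (d - ((M - N) % d - t)) (by omega) (by omega)
    refine ⟨d + k, by omega, by omega, ?_⟩
    rw [ne_comm]
    convert hk using 2
    ring

theorem RichTo.update {e s : ℤ} {a : A} (h : RichTo g e) (hs0 : 0 ≤ s) (hse : s ≤ e)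
    (hpal : Pal (Function.update g e a) s (e + 1))
    (hu : ∀ t, 0 ≤ t → t < s → ∃ k, s ≤ k ∧ k ≤ e ∧ Function.update g e a k ≠ g (k - s + t)) :
    RichTo (Function.update g e a) (e + 1) := by
  intro N h0 hN
  by_cases hNe : N ≤ e
  · exact h.congr (fun k _ hk => Function.update_of_ne hk.ne _ _) N h0 hNe
  obtain rfl : N = e + 1 := by omega
  refine ⟨s, hs0, by omega, hpal, fun t h1 h2 => ?_⟩
  obtain ⟨k, hk1, hk2, hk⟩ := hu t h1 h2
  refine ⟨k, hk1, by omega, ?_⟩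
  rwa [Function.update_of_ne (a := k - s + t) (by omega)]

/-- `f 0 ⋯ f (e - 1)` has a palindromic suffix whose center lies strictly between
`(M - 1) / 2` and `(M - 1 + d) / 2`. -/
def HasCenter (f : ℤ → A) (M d e : ℤ) : Prop :=
  ∃ c, M - 1 < c ∧ c < M - 1 + d ∧ c ≤ 2 * e - 1 ∧ Pal f (c + 1 - e) e

theorem HasCenter.exists_flexed {M d e : ℤ} (hper : ∀ k, g (k + d) = g k)
    (hrefl : ∀ k, g (M - 1 - k) = g k) (hrich : ∀ B, RichTo g B) (heM : e < M)
    (he : HasCenter g M d e) (he' : ¬ HasCenter g M d (e + 1)) :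
    ∃ i, 0 < i ∧ i ≤ e ∧ Pal g i e ∧ g (i - 1) ≠ g e ∧
      ∀ t, g (t - 1) = g (i - 1) → (∀ k, 0 ≤ k → k < e - i → g (t + k) = g (i + k)) →
        g (t + (e - i)) ≠ g (i - 1) := by
  obtain ⟨c, hc1, hc2, ⟨hce, hc⟩, hmin⟩ := exists_first
    (p := fun c => c ≤ 2 * e - 1 ∧ Pal g (c + 1 - e) e) (a := M - 1) (b := M - 1 + d)
    (let ⟨c, h1, h2, h3⟩ := he; ⟨c, h1, h2, h3⟩)
  obtain ⟨i, rfl⟩ : ∃ i, c = i + e - 1 := ⟨c + 1 - e, by ring⟩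
  rw [show i + e - 1 + 1 - e = i by ring] at hc
  have hne : g (i - 1) ≠ g e := by
    intro heq
    refine he' ⟨i + e - 1, hc1, hc2, by omega, fun k h1 h2 => ?_⟩
    rcases eq_or_ne k e with rfl | hk
    · rw [← heq]; congr 1; ring
    rcases eq_or_ne k (i - 1) with rfl | hk'
    · rw [heq]; congr 1; ring
    · rw [hc k (by omega) (by omega)]
      congr 1; ring
  have hrev : ∀ t, (∀ k, 0 ≤ k → k < e - i → g (t + k) = g (i + k)) → Pal g t (t + (e - i)) := by
    intro t ht k h1 h2
    have e1 := ht (k - t) (by omega) (by omega)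
    have e2 := ht (t + (e - i) - 1 - k) (by omega) (by omega)
    rw [show t + (k - t) = k by ring] at e1
    rw [show t + (t + (e - i) - 1 - k) = t + (t + (e - i)) - 1 - k by ring] at e2
    rw [e1, e2, hc _ (by omega) (by omega)]
    congr 1; ring
  have hleft : ∀ t, M - e < t → t < i → ∃ k, 0 ≤ k ∧ k < e - i ∧ g (t + k) ≠ g (i + k) := by
    by_contra! hcon
    obtain ⟨t, h1, h2, ht, hlast⟩ := exists_last
      (p := fun t => ∀ k, 0 ≤ k → k < e - i → g (t + k) = g (i + k)) hcon
    have hp := (hrich (i + (e - i))).pal_return (i := t) (i' := i) (l := e - i) (by omega) h2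
      (by omega) le_rfl (hrev t ht) ht fun u h3 h4 => by
        have := hlast u h3 h4
        push Not at this
        obtain ⟨k, hk1, hk2, hk⟩ := this
        exact ⟨k, hk1, hk2, by rwa [ht k hk1 hk2]⟩
    refine hmin (t + e - 1) (by omega) (by omega) ⟨by omega, ?_⟩
    rw [show t + e - 1 + 1 - e = t by ring]
    rwa [add_sub_cancel] at hp
  have hright : ∀ t, i < t → t < M - e + d →
      ∃ k, 0 ≤ k ∧ k < e - i ∧ g (t + k) ≠ g (i + k) := by
    by_contra! hcon
    obtain ⟨t, h1, h2, ht, hfirst⟩ := exists_first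
      (p := fun t => ∀ k, 0 ≤ k → k < e - i → g (t + k) = g (i + k)) hcon
    have hp := (hrich (t + (e - i))).pal_return (i := i) (i' := t) (l := e - i) (by omega) h1
      (by omega) le_rfl (by rwa [add_sub_cancel]) (fun k h3 h4 => (ht k h3 h4).symm)
      fun u h3 h4 => by
        have := hfirst u h3 h4
        push Not at this
        exact this
    by_cases hte : t + e - 1 ≤ 2 * e + 1
    · refine he' ⟨t + e - 1, by omega, by omega, by omega, fun k h3 h4 => ?_⟩
      rw [hp k (by omega) (by omega)]
      congr 1; ring
    · exact he' ⟨2 * e + 1, by omega, by omega, by omega, fun k h3 h4 => by omega⟩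
  refine ⟨i, by omega, by omega, hc, hne, fun t ht1 ht ht2 => ?_⟩
  have h1 := Int.emod_nonneg (t - (M - e)) (show d ≠ 0 by omega)
  have h2 := Int.emod_lt_of_pos (t - (M - e)) (show 0 < d by omega)
  have h3 := Int.emod_add_mul_ediv (t - (M - e)) d
  set r := (t - (M - e)) % d
  have hsh : ∀ k, g (M - e + r + k) = g (t + k) := by
    intro k
    rw [← periodic_mul hper ((t - (M - e)) / d) (M - e + r + k)]
    congr 1
    linarith
  have hoc : ∀ k, 0 ≤ k → k < e - i → g (M - e + r + k) = g (i + k) :=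
    fun k h4 h5 => (hsh k).trans (ht k h4 h5)
  rcases eq_or_ne r 0 with hr0 | hr0
  · have := hsh (-1)
    rw [hr0, ← hrefl, show M - 1 - (M - e + 0 + -1) = e by ring, ← sub_eq_add_neg, ht1] at this
    exact hne this.symm
  rcases lt_trichotomy (M - e + r) i with hlt | heq | hgt
  · obtain ⟨k, hk1, hk2, hk⟩ := hleft _ (by omega) hlt
    exact hk (hoc k hk1 hk2)
  · have := hsh (e - i)
    rw [heq, ht2, add_sub_cancel] at this
    exact hne this.symm
  · obtain ⟨k, hk1, hk2, hk⟩ := hright _ hgt (by omega)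
    exact hk (hoc k hk1 hk2)

theorem exists_hasCenter_not_succ {M d e : ℤ} (he : HasCenter g M d e) (heM : e ≤ M)
    (hM : ¬ HasCenter g M d M) :
    ∃ e', e ≤ e' ∧ e' < M ∧ HasCenter g M d e' ∧ ¬ HasCenter g M d (e' + 1) := by
  have hne : e ≠ M := by rintro rfl; exact hM he
  obtain ⟨e', h1, h2, h3, h4⟩ := exists_last (p := HasCenter g M d) (a := e - 1) (b := M)
    ⟨e, by omega, by omega, he⟩
  refine ⟨e', by omega, h2, h3, ?_⟩
  rcases eq_or_ne (e' + 1) M with h | h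
  · rwa [h]
  · exact h4 _ (by omega) (by omega)

/-- Every rich word of length `n > 0` has a rich extension of length `e ≤ 2 * n` which has two
rich one-letter extensions. -/
theorem RichTo.exists_branch [Nontrivial A] {n : ℤ} (h : RichTo f n) (hn : 0 < n) :
    ∃ (g : ℤ → A) (e : ℤ) (a : A), (∀ k, 0 ≤ k → k < n → g k = f k) ∧ n ≤ e ∧ e ≤ 2 * n ∧
      RichTo g (e + 1) ∧ a ≠ g e ∧ RichTo (Function.update g e a) (e + 1) := by
  obtain ⟨g₀, s, hs0, hsn, hfg₀, hpal, hrich₀⟩ := h.exists_closure hn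
  obtain ⟨g, d, hd0, hdM, hg₀g, hper, hrefl, hrich, hmin⟩ :=
    hrich₀.exists_periodic (by omega) hpal
  have hfg : ∀ k, 0 ≤ k → k < n → g k = f k := fun k h1 h2 => by
    rw [hg₀g k h1 (by omega), hfg₀ k h1 h2]
  rcases eq_or_ne d 1 with rfl | hd1
  · have hconst : ∀ k, g k = g n := fun k => by
      have := periodic_mul hper (n - k) k
      rw [← this]
      congr 1; ring
    obtain ⟨a, ha⟩ := exists_ne (g n)
    refine ⟨g, n, a, hfg, le_rfl, by omega, hrich _, ha,
      (hrich n).update (s := n) hn.le le_rfl ?_ ?_⟩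
    · intro k h1 h2
      congr 1; omega
    · intro t _ _
      refine ⟨n, le_rfl, le_rfl, ?_⟩
      rwa [Function.update_self, hconst]
  set M := n + s
  have hM : ¬ HasCenter g M d M := by
    rintro ⟨c, h1, h2, -, h3⟩
    exact hmin _ (by omega) (by omega) h3
  obtain ⟨e, j, hj, heM, hne, hen, he, he'⟩ : ∃ e j, 0 ≤ j ∧ e < M ∧ n ≤ e + j * d ∧
      e + j * d ≤ 2 * n ∧ HasCenter g M d e ∧ ¬ HasCenter g M d (e + 1) := by
    by_cases hB : HasCenter g M d n
    · obtain ⟨e, h1, h2, h3⟩ := exists_hasCenter_not_succ hB (by omega) hM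
      exact ⟨e, 0, le_rfl, h2, by omega, by omega, h3⟩
    · have hdn : d ≤ n := by
        by_contra hc
        exact hB ⟨2 * n - 1, by omega, by omega, le_rfl, fun k _ _ => by omega⟩
      obtain ⟨e, h1, h2, h3⟩ := exists_hasCenter_not_succ (g := g) (M := M) (d := d)
        (e := (M + 2) / 2)
        ⟨M, by omega, by omega, by omega, fun k _ _ => by congr 1; omega⟩ (by omega) hM
      by_cases hen : n ≤ e
      · exact ⟨e, 0, le_rfl, h2, by omega, by omega, h3⟩
      have h4 := Int.emod_nonneg (e - n) hd0.ne'
      have h5 := Int.emod_lt_of_pos (e - n) hd0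
      have h6 := Int.emod_add_mul_ediv (e - n) d
      have h7 : (e - n) / d ≤ 0 := Int.ediv_nonpos_of_nonpos_of_neg (by omega) hd0
      exact ⟨e, -((e - n) / d), by omega, h2, by linarith, by linarith, h3⟩
  obtain ⟨i, hi0, hie, hpali, hnei, hocc⟩ := he.exists_flexed hper hrefl hrich heM he'
  have hmul := periodic_mul hper
  have hjd : 0 ≤ j * d := mul_nonneg hj hd0.le
  set D := j * d with hD
  have hDs : ∀ k, g (k + D) = g k := hmul j
  have hupd : ∀ k, i - 1 + D ≤ k → k < e + D →
      Function.update g (e + D) (g (i - 1)) k = g (k - D) := by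
    intro k h1 h2
    rw [Function.update_of_ne h2.ne, ← hDs (k - D), sub_add_cancel]
  refine ⟨g, e + D, g (i - 1), hfg, hne, hen, hrich _, by rwa [hDs],
    (hrich _).update (s := i - 1 + D) (by omega) (by omega) ?_ ?_⟩
  · intro k h1 h2
    rcases eq_or_ne k (e + D) with rfl | hk
    · rw [Function.update_self, show i - 1 + D + (e + D + 1) - 1 - (e + D) = i - 1 + D by ring,
        hupd _ le_rfl (by omega), add_sub_cancel_right]
    rcases eq_or_ne k (i - 1 + D) with rfl | hk'
    · rw [show i - 1 + D + (e + D + 1) - 1 - (i - 1 + D) = e + D by ring, Function.update_self,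
        hupd _ le_rfl (by omega), add_sub_cancel_right]
    · rw [hupd k h1 (by omega), hupd _ (by omega) (by omega), hpali _ (by omega) (by omega)]
      congr 1; ring
  · intro t _ _
    by_contra! hcon
    refine hocc (t + 1) ?_ ?_ ?_
    · have := hcon (i - 1 + D) le_rfl (by omega)
      rw [hupd _ le_rfl (by omega), add_sub_cancel_right] at this
      rw [this]
      congr 1; ring
    · intro k h1 h2
      have := hcon (i + k + D) (by omega) (by omega)
      rw [hupd _ (by omega) (by omega), add_sub_cancel_right] at this
      rw [this]
      congr 1; ring
    · have := hcon (e + D) (by omega) le_rfl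
      rw [Function.update_self] at this
      rw [this]
      congr 1; ring

end Sequences

section Words

variable {A : Type*}

theorem finite_palindromic_factors (w : List A) : {p : List A | p.reverse = p ∧ p <:+: w}.Finite :=
  (List.finite_toSet w.sublists).subset fun _ hp => List.mem_sublists.2 hp.2.sublist

theorem infix_concat {s v : List A} {x : A} (h : s <:+: v ++ [x]) :
    s <:+: v ∨ s <:+ v ++ [x] := by
  obtain ⟨a, b, hab⟩ := h
  rcases List.eq_nil_or_concat b with rfl | ⟨b, y, rfl⟩
  · exact .inr ⟨a, by simpa using hab⟩
  · rw [List.concat_eq_append, ← List.append_assoc] at hab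
    exact .inl ⟨a, b, (List.append_inj' hab rfl).1⟩

/-- A palindromic suffix of `v ++ [x]` that is not the longest one is a factor of `v`. -/
theorem infix_of_palindromic_suffix {s s' v : List A} {x : A} (hs : s.reverse = s)
    (hs' : s'.reverse = s') (h : s <:+ v ++ [x]) (h' : s' <:+ v ++ [x])
    (hl : s.length < s'.length) : s <:+: v := by
  have h1 : s <+: s' := by
    have := List.suffix_of_suffix_length_le h h' hl.le
    rwa [← hs, ← hs', List.reverse_suffix] at this
  rcases List.eq_nil_or_concat s' with rfl | ⟨t, y, rfl⟩
  · simp at hl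
  rw [List.concat_eq_append] at h1 h'
  have h2 : s <+: t := by
    rcases List.prefix_concat_iff.1 h1 with rfl | h2
    · simp at hl
    · exact h2
  obtain ⟨a, ha⟩ := h'
  rw [← List.append_assoc] at ha
  exact h2.isInfix.trans ⟨a, [], by simpa using (List.append_inj' ha rfl).1⟩

theorem palindromic_factors_concat_subset {s v : List A} {x : A} (hs : s.reverse = s)
    (hsv : s <:+ v ++ [x]) (hnot : ¬ s <:+: v) :
    {p : List A | p.reverse = p ∧ p <:+: v ++ [x]} ⊆
      insert s {p : List A | p.reverse = p ∧ p <:+: v} := by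
  rintro p ⟨hp, hpv⟩
  by_cases hpv' : p <:+: v
  · exact .inr ⟨hp, hpv'⟩
  have hps := (infix_concat hpv).resolve_left hpv'
  rcases lt_trichotomy p.length s.length with hl | hl | hl
  · exact absurd (infix_of_palindromic_suffix hp hs hps hsv hl) hpv'
  · exact .inl ((List.suffix_of_suffix_length_le hps hsv hl.le).eq_of_length hl)
  · exact absurd (infix_of_palindromic_suffix hs hp hsv hps hl) hnot

theorem ncard_palindromic_factors_concat_le (v : List A) (x : A) :
    {p : List A | p.reverse = p ∧ p <:+: v ++ [x]}.ncard ≤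
      {p : List A | p.reverse = p ∧ p <:+: v}.ncard + 1 := by
  by_cases h : ∃ s : List A, s.reverse = s ∧ s <:+ v ++ [x] ∧ ¬ s <:+: v
  · obtain ⟨s, hs, hsv, hnot⟩ := h
    exact (Set.ncard_le_ncard (palindromic_factors_concat_subset hs hsv hnot)
      ((finite_palindromic_factors v).insert s)).trans (Set.ncard_insert_le _ _)
  · push Not at h
    refine (Set.ncard_le_ncard ?_ (finite_palindromic_factors v)).trans (Nat.le_succ _)
    rintro p ⟨hp, hpv⟩
    exact ⟨hp, (infix_concat hpv).elim id (h p hp)⟩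

theorem ncard_palindromic_factors_le (w : List A) :
    {p : List A | p.reverse = p ∧ p <:+: w}.ncard ≤ w.length + 1 := by
  induction w using List.reverseRecOn with
  | nil =>
    refine (Set.ncard_le_ncard (t := {[]}) ?_).trans (by simp)
    rintro p ⟨-, hp⟩
    simpa using hp
  | append_singleton v x ih =>
    refine (ncard_palindromic_factors_concat_le v x).trans ?_
    simpa using ih

theorem rich_nil : Rich ([] : List A) := by
  have : {p : List A | p.reverse = p ∧ p <:+: []} = {[]} := by
    ext p
    simp +contextual [List.infix_nil]
  rw [Rich, this, Set.ncard_singleton, List.length_nil]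

theorem rich_concat_iff {v : List A} {x : A} :
    Rich (v ++ [x]) ↔ Rich v ∧ ∃ s : List A, s.reverse = s ∧ s <:+ v ++ [x] ∧ ¬ s <:+: v := by
  have h1 := ncard_palindromic_factors_le v
  constructor
  · intro h
    have h2 := ncard_palindromic_factors_concat_le v x
    unfold Rich at h ⊢
    rw [List.length_append, List.length_singleton] at h
    refine ⟨by omega, ?_⟩
    by_contra! hc
    have := Set.ncard_le_ncard (s := {p : List A | p.reverse = p ∧ p <:+: v ++ [x]})
      (t := {p : List A | p.reverse = p ∧ p <:+: v})
      (fun p hp => ⟨hp.1, (infix_concat hp.2).elim id (hc p hp.1)⟩) (finite_palindromic_factors v)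
    omega
  · rintro ⟨h, s, hs, hsv, hnot⟩
    unfold Rich at h ⊢
    have heq : {p : List A | p.reverse = p ∧ p <:+: v ++ [x]} =
        insert s {p : List A | p.reverse = p ∧ p <:+: v} := by
      refine (palindromic_factors_concat_subset hs hsv hnot).antisymm ?_
      rintro p (rfl | ⟨hp, hpv⟩)
      · exact ⟨hs, hsv.isInfix⟩
      · exact ⟨hp, hpv.trans (List.prefix_append v [x]).isInfix⟩
    rw [heq, Set.ncard_insert_of_notMem (fun hm => hnot hm.2) (finite_palindromic_factors v), h,
      List.length_append, List.length_singleton]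

/-- The factor of length `l` of `f` starting at position `i`. -/
def factor (f : ℤ → A) (i : ℤ) (l : ℕ) : List A :=
  (List.range l).map fun k : ℕ => f (i + k)

variable {f g : ℤ → A}

@[simp]
theorem length_factor (f : ℤ → A) (i : ℤ) (l : ℕ) : (factor f i l).length = l := by
  simp [factor]

theorem factor_add (f : ℤ → A) (i : ℤ) (l m : ℕ) :
    factor f i (l + m) = factor f i l ++ factor f (i + l) m := by
  simp [factor, List.range_add, Function.comp_def, add_assoc]

theorem factor_succ (f : ℤ → A) (i : ℤ) (l : ℕ) :
    factor f i (l + 1) = factor f i l ++ [f (i + l)] := by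
  simp [factor, List.range_succ]

theorem factor_eq_factor_iff {i j : ℤ} {l : ℕ} :
    factor f i l = factor g j l ↔ ∀ k : ℕ, k < l → f (i + k) = g (j + k) := by
  simp [factor]

theorem reverse_factor_iff {i : ℤ} {l : ℕ} :
    (factor f i l).reverse = factor f i l ↔ Pal f i (i + l) := by
  rw [List.ext_getElem_iff]
  simp only [List.length_reverse, length_factor, true_and, List.getElem_reverse]
  simp only [factor, List.getElem_map, List.getElem_range]
  constructor
  · intro h k h1 h2
    have := h (k - i).toNat (by omega) (by omega)
    rw [show i + ((k - i).toNat : ℤ) = k by omega] at this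
    rw [← this]
    congr 1; omega
  · intro h k h1 _
    rw [h (i + k) (by omega) (by omega)]
    congr 1; omega

theorem factor_isInfix_factor {t : ℤ} {l N : ℕ} (h0 : 0 ≤ t) (hN : t + l ≤ N) :
    factor f t l <:+: factor f 0 N := by
  obtain ⟨t, rfl⟩ := Int.eq_ofNat_of_zero_le h0
  obtain ⟨m, rfl⟩ : ∃ m, N = t + l + m := ⟨N - (t + l), by omega⟩
  refine ⟨factor f 0 t, factor f (0 + (t + l : ℕ)) m, ?_⟩
  rw [factor_add, factor_add, zero_add, zero_add]

theorem factor_isSuffix_factor {s N : ℕ} (h : s ≤ N) : factor f s (N - s) <:+ factor f 0 N := by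
  obtain ⟨m, rfl⟩ := Nat.exists_eq_add_of_le h
  exact ⟨factor f 0 s, by rw [factor_add, zero_add, Nat.add_sub_cancel_left]⟩

theorem eq_factor_of_append {a p b : List A} {N : ℕ} (h : a ++ p ++ b = factor f 0 N) :
    p = factor f a.length p.length := by
  have hN : N = a.length + p.length + b.length := by
    simpa [add_assoc] using (congrArg List.length h).symm
  rw [hN, factor_add, factor_add, zero_add] at h
  have h1 := (List.append_inj h (by simp)).1
  exact (List.append_inj h1 (by simp)).2

theorem exists_palindromic_suffix_iff {N : ℕ} :
    (∃ s : List A, s.reverse = s ∧ s <:+ factor f 0 (N + 1) ∧ ¬ s <:+: factor f 0 N) ↔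
      ∃ s : ℤ, 0 ≤ s ∧ s < (N + 1 : ℕ) ∧ Pal f s (N + 1 : ℕ) ∧
        Unioccurrent f s (N + 1 : ℕ) := by
  constructor
  · rintro ⟨p, hp, ⟨a, ha⟩, hnot⟩
    have hlen : a.length + p.length = N + 1 := by simpa using congrArg List.length ha
    have hpf := eq_factor_of_append (b := []) (by simpa using ha)
    have hp0 : p.length ≠ 0 := by
      intro h0
      rw [List.length_eq_zero_iff] at h0
      exact hnot (by simp [h0])
    refine ⟨a.length, by omega, by omega, ?_, fun t h1 h2 => ?_⟩
    · rw [hpf, reverse_factor_iff] at hp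
      rwa [← hlen, Nat.cast_add]
    · by_contra! hc
      refine hnot ?_
      have : p = factor f t p.length := by
        refine hpf.trans (factor_eq_factor_iff.2 fun k hk => ?_)
        rw [hc _ (by omega) (by omega)]
        congr 1; ring
      rw [this]
      exact factor_isInfix_factor h1 (by omega)
  · rintro ⟨s, h0, h1, hp, hu⟩
    obtain ⟨s, rfl⟩ := Int.eq_ofNat_of_zero_le h0
    refine ⟨factor f s (N + 1 - s), ?_, factor_isSuffix_factor (by omega), ?_⟩
    · rw [reverse_factor_iff]
      rwa [show ((s : ℤ) + (N + 1 - s : ℕ)) = (N + 1 : ℕ) by omega]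
    · rintro ⟨a, b, hab⟩
      have hlen := congrArg List.length hab
      simp only [List.length_append, length_factor] at hlen
      have := eq_factor_of_append hab
      rw [length_factor, factor_eq_factor_iff] at this
      obtain ⟨k, hk1, hk2, hk⟩ := hu a.length (by omega) (by omega)
      have hk' := this (k - s).toNat (by omega)
      rw [show (s : ℤ) + ((k - s).toNat : ℤ) = k by omega,
        show (a.length : ℤ) + ((k - s).toNat : ℤ) = k - s + a.length by omega] at hk'
      exact hk hk'

theorem rich_factor_iff {n : ℕ} : Rich (factor f 0 n) ↔ RichTo f n := by
  induction n with
  | zero => exact ⟨fun _ N h0 hN => by norm_num at hN; omega, fun _ => rich_nil⟩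
  | succ n ih =>
    have h := exists_palindromic_suffix_iff (f := f) (N := n)
    rw [factor_succ] at h
    rw [factor_succ, rich_concat_iff, ih, h]
    constructor
    · rintro ⟨h1, h2⟩ N h0 hN
      rcases (show N ≤ n ∨ N = (n + 1 : ℕ) by omega) with hNn | rfl
      · exact h1 N h0 hNn
      · exact h2
    · intro h1
      exact ⟨h1.mono (by omega), h1 _ (by omega) le_rfl⟩

end Words

theorem stmt12 {A : Type*} [Fintype A] [Nontrivial A]
    (w : List A) (hw : Rich w) (hne : w ≠ []) :
    ∃ u : List A, u.length ≤ w.length ∧ Rich (w ++ u) ∧ TwoWays (w ++ u) := by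
  obtain ⟨f, hf⟩ : ∃ f : ℤ → A, w = factor f 0 w.length := by
    refine ⟨fun k => w.getD k.toNat (w.head hne), List.ext_getElem (by simp) fun k h1 h2 => ?_⟩
    simp [factor, h1]
  have hpos := List.length_pos_iff.2 hne
  set n := w.length
  rw [hf, rich_factor_iff] at hw
  obtain ⟨g, e, a, hgf, hne, hen, hg, ha, hga⟩ := hw.exists_branch (by omega)
  obtain ⟨e, rfl⟩ := Int.eq_ofNat_of_zero_le (show 0 ≤ e by omega)
  have hwg : w = factor g 0 n := by
    rw [hf, factor_eq_factor_iff]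
    exact fun k hk => (hgf _ (by omega) (by omega)).symm
  have hwu : w ++ factor g n (e - n) = factor g 0 e := by
    conv_lhs => rw [hwg]
    have := factor_add g 0 n (e - n)
    rwa [zero_add, Nat.add_sub_cancel' (by omega), eq_comm] at this
  have hupd : factor (Function.update g e a) 0 e = factor g 0 e :=
    factor_eq_factor_iff.2 fun k hk => Function.update_of_ne (by omega) _ _
  refine ⟨factor g n (e - n), by simp; omega, ?_, a, g e, ha, ?_, ?_⟩ <;> rw [hwu]
  · exact rich_factor_iff.2 (hg.mono (by omega))
  · rw [← Nat.cast_succ, ← rich_factor_iff, Nat.succ_eq_add_one, factor_succ, hupd, zero_add,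
      Function.update_self] at hga
    exact hga
  · rw [← Nat.cast_succ, ← rich_factor_iff, Nat.succ_eq_add_one, factor_succ, zero_add] at hg
    exact hg
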